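/- Let p, q ∈ R be idempotents such that p - q is group invertible. Then p - p*q*p, p - p*q and p - q*p are group invertible, with (p - p*q*p)^# = f*g = (p - q1)^#, (p - p*q)^# = (f*g)^2 * (1-q), and (p - q*p)^# = (1-q) * (f*g)^2. -/

import Mathlib

/-!
Write `d = p - q`, `c = d^#`, `D = d ^ 2` and `e = c ^ 2`, the group inverse of `D`. Since `p` commutes
with `D`, it commutes with `e` (`IsGroupInvOf.commute`), so `f * g = e * p`. The three elements
in question are `D * p`, `p * d` and `d * p`; each such `a` commutes with `e` and satisfies
`a * a = D * a` (because `p * d * p = D * p`) and `e * D * a = a`. Hence `e * e * a` is its group inverse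
(`isGroupInvOf_of_sq`), and `p * (1 - q) = p * d`, `(1 - q) * p = d * p` give the stated forms.
-/

variable {R : Type*} [Ring R]

/-- `c` is a group inverse of `a`. -/
def IsGroupInvOf (a c : R) : Prop := a * c * a = a ∧ c * a * c = c ∧ a * c = c * a

/-- `a` is group invertible. -/
def GroupInvertible (a : R) : Prop := ∃ c, IsGroupInvOf a c

/-- The group inverse `a^#` (junk value `0` if it does not exist). -/
noncomputable def gi (a : R) : R :=
  haveI := Classical.dec (GroupInvertible a)
  if h : GroupInvertible a then h.choose else 0

/-- The spectral idempotent `a^π = 1 - a * a^#`. -/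
noncomputable def sp (a : R) : R := 1 - a * gi a

theorem IsGroupInvOf.unique {R : Type*} [Ring R] {a b c : R} (hb : IsGroupInvOf a b)
    (hc : IsGroupInvOf a c) : b = c := by
  obtain ⟨b1, b2, b3⟩ := hb
  obtain ⟨c1, c2, c3⟩ := hc
  calc b = b * (a * c * a) * b := by rw [c1, b2]
    _ = (b * a) * c * (a * b) := by noncomm_ring
    _ = (a * b) * c * (b * a) := by rw [b3]
    _ = (a * b) * (c * a * c) * (b * a) := by rw [c2]
    _ = (a * b) * (c * a) * c * (b * a) := by noncomm_ring
    _ = (a * b) * (a * c) * c * (b * a) := by rw [c3]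
    _ = (a * b * a) * c * c * (b * a) := by noncomm_ring
    _ = (c * a) * c * (b * a) := by rw [b1, c3]
    _ = c * (a * c) * (b * a) := by noncomm_ring
    _ = c * (c * a) * (b * a) := by rw [c3]
    _ = c * c * (a * b * a) := by noncomm_ring
    _ = c * (c * a) := by rw [b1, mul_assoc]
    _ = c := by rw [← c3, ← mul_assoc, c2]

theorem gi_spec {R : Type*} [Ring R] {a : R} (h : GroupInvertible a) :
    IsGroupInvOf a (gi a) := by
  unfold gi
  rw [dif_pos h]
  exact h.choose_spec

theorem IsGroupInvOf.gi_eq {R : Type*} [Ring R] {a c : R} (h : IsGroupInvOf a c) :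
    gi a = c :=
  (gi_spec ⟨c, h⟩).unique h

/-- The group inverse lies in the double commutant: both products equal `c * x * a * c`. -/
theorem IsGroupInvOf.commute {R : Type*} [Ring R] {a c x : R} (h : IsGroupInvOf a c)
    (hx : x * a = a * x) : x * c = c * x := by
  obtain ⟨c1, c2, c3⟩ := h
  have hl : c * x = c * x * a * c := by
    calc c * x = c * (a * c) * x := by rw [← mul_assoc, c2]
      _ = c * c * (a * x) := by rw [c3]; noncomm_ring
      _ = c * c * x * (a * c * a) := by rw [c1, ← hx]; noncomm_ring
      _ = c * c * (x * a) * (c * a) := by noncomm_ring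
      _ = c * (c * a) * x * (a * c) := by rw [hx, c3]; noncomm_ring
      _ = (c * a * c) * x * (a * c) := by rw [mul_assoc c a c, c3]
      _ = c * x * a * c := by rw [c2]; noncomm_ring
  have hr : x * c = c * x * a * c := by
    calc x * c = x * (c * a) * c := by rw [mul_assoc, c2]
      _ = (x * a) * c * c := by rw [← c3]; noncomm_ring
      _ = (a * c * a) * x * c * c := by rw [c1, hx]
      _ = (a * c) * (a * x) * c * c := by noncomm_ring
      _ = (c * a) * (x * a) * c * c := by rw [c3, hx]
      _ = c * (a * x) * (a * c) * c := by noncomm_ring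
      _ = c * (x * a) * (c * a) * c := by rw [hx, c3]
      _ = c * x * a * (c * a * c) := by noncomm_ring
      _ = c * x * a * c := by rw [c2]
  rw [hl, hr]

theorem isGroupInvOf_of_sq {R : Type*} [Ring R] {a D e : R} (hea : a * e = e * a)
    (haa : a * a = D * a) (heD : e * (D * a) = a) : IsGroupInvOf a (e * e * a) := by
  have h1 : a * (e * e * a) = e * a := by
    calc a * (e * e * a) = (a * e) * e * a := by noncomm_ring
      _ = e * (a * e) * a := by rw [hea, mul_assoc e a e, hea]
      _ = e * (e * (a * a)) := by rw [hea]; noncomm_ring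
      _ = e * a := by rw [haa, heD]
  have h2 : e * e * a * a = e * a := by
    rw [mul_assoc, haa, mul_assoc, heD]
  refine ⟨?_, ?_, ?_⟩
  · rw [h1, mul_assoc, haa, heD]
  · rw [h2, mul_assoc e a, h1, mul_assoc]
  · rw [h1, h2]

theorem group_inv_products (p q q1 f g h : R) (hp : p * p = p) (hq : q * q = q)
    (h1 : q1 = p * q * p) (hpq : GroupInvertible (p - q))
    (hf : f = p * gi (p - q)) (hg : g = gi (p - q) * p)
    (hh : h = gi (p - q) * (p - q)) :
    GroupInvertible (p - p * q * p) ∧ GroupInvertible (p - p * q) ∧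
      GroupInvertible (p - q * p) ∧
      gi (p - p * q * p) = f * g ∧ f * g = gi (p - q1) ∧
      gi (p - p * q) = (f * g) ^ 2 * (1 - q) ∧
      gi (p - q * p) = (1 - q) * (f * g) ^ 2 := by
  have hc := gi_spec hpq
  generalize gi (p - q) = c at *
  obtain ⟨d, hd⟩ : ∃ d, d = p - q := ⟨_, rfl⟩
  rw [← hd] at hc
  obtain ⟨c1, c2, c3⟩ := hc
  have hpd : p * (1 - q) = p * d := by rw [hd, mul_sub, mul_sub, hp, mul_one]
  have hdp : (1 - q) * p = d * p := by rw [hd, sub_mul, sub_mul, hp, one_mul]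
  have hD : d * d = p - p * q - q * p + q := by
    rw [hd, sub_mul, mul_sub, mul_sub, hp, hq]; abel
  have hpD : p * (d * d) = p - p * q * p := by
    rw [hD, mul_add, mul_sub, mul_sub, ← mul_assoc, ← mul_assoc, hp]; abel
  have hDp : d * d * p = p - p * q * p := by
    rw [hD, add_mul, sub_mul, sub_mul, mul_assoc q, hp]; abel
  have hpdp : p * d * p = p - p * q * p := by
    rw [hd, mul_sub, sub_mul, hp, hp]
  have hcd : Commute c d := c3.symm
  -- `c ^ 2` is the group inverse of `d ^ 2`, as `c` and `d` commute
  have hdc : d * d * (c * c) = d * c := by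
    calc d * d * (c * c) = d * (d * c) * c := by noncomm_ring
      _ = (d * c * d) * c := by rw [mul_assoc d c d, c3]
      _ = d * c := by rw [c1]
  have hcd2 : c * c * (d * d) = d * c := by
    rw [← hdc]; exact ((hcd.mul_right hcd).mul_left (hcd.mul_right hcd)).eq
  have hE : IsGroupInvOf (d * d) (c * c) := by
    refine ⟨?_, ?_, by rw [hdc, hcd2]⟩
    · rw [hdc, ← mul_assoc, c1]
    · rw [hcd2, c3, ← mul_assoc, c2]
  have hpe : p * (c * c) = c * c * p := hE.commute (hpD.trans hDp.symm)
  have hde : d * (c * c) = c * c * d := (hcd.symm.mul_right hcd.symm).eq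
  have hDed : c * c * (d * d) * d = d := by rw [hcd2, c1]
  have hDpp : d * d * p = p * (d * d) := hDp.trans hpD.symm
  obtain ⟨e, he⟩ : ∃ e, e = c * c := ⟨_, rfl⟩
  rw [← he] at hpe hde hDed hE
  have hfg : f * g = e * p := by
    rw [hf, hg, mul_assoc, ← mul_assoc c, ← he, ← mul_assoc, hpe, mul_assoc, hp]
  have hfg2 : (f * g) ^ 2 = e * e * p := by
    rw [hfg, sq, mul_assoc, ← mul_assoc p, hpe, mul_assoc e p p, hp, mul_assoc]
  have hfg2' : (f * g) ^ 2 = p * (e * e) := by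
    rw [hfg2, ← mul_assoc, hpe, mul_assoc e p e, hpe, mul_assoc]
  have cpe : Commute p e := hpe
  have cde : Commute d e := hde
  have cpe2 : Commute p (e * e) := cpe.mul_right cpe
  have cde2 : Commute d (e * e) := cde.mul_right cde
  have k1 : IsGroupInvOf (p * d) (e * e * (p * d)) := by
    refine isGroupInvOf_of_sq (cpe.mul_left cde).eq (D := d * d) ?_ ?_
    · rw [← mul_assoc (p * d), hpdp, ← hDp, mul_assoc (d * d)]
    · rw [← mul_assoc (d * d), hDpp, mul_assoc p, ← mul_assoc e, ← hpe, mul_assoc p,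
        ← mul_assoc e, hDed]
  have k2 : IsGroupInvOf (d * p) (e * e * (d * p)) := by
    refine isGroupInvOf_of_sq (cde.mul_left cpe).eq (D := d * d) ?_ ?_
    · calc d * p * (d * p) = d * (p * d * p) := by noncomm_ring
        _ = d * (d * d * p) := by rw [hpdp, hDp]
        _ = d * d * (d * p) := by noncomm_ring
    · rw [← mul_assoc (d * d), ← mul_assoc e, ← mul_assoc e, hDed]
  have heDp : e * (d * d) * (d * d) * p = d * d * p := by
    rw [← mul_assoc (e * (d * d)), hDed]
  have k3 : IsGroupInvOf (d * d * p) (e * p) := by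
    have hk : IsGroupInvOf (d * d * p) (e * e * (d * d * p)) := by
      refine isGroupInvOf_of_sq ((cde.mul_left cde).mul_left cpe).eq (D := d * d) ?_ ?_
      · rw [mul_assoc (d * d) p, ← mul_assoc p, ← hDpp, mul_assoc (d * d) p p, hp]
      · rw [← mul_assoc (d * d), ← mul_assoc e, ← mul_assoc e, heDp]
    have hee : e * e * (d * d * p) = e * p := by
      rw [← mul_assoc, mul_assoc e e, ← hE.2.2, ← mul_assoc, hE.2.1]
    rwa [hee] at hk
  have e1 : p - p * q = p * d := by rw [hd, mul_sub, hp]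
  have e2 : p - q * p = d * p := by rw [hd, sub_mul, hp]
  rw [h1, ← hDp, e1, e2, k1.gi_eq, k2.gi_eq, k3.gi_eq, hfg]
  refine ⟨⟨_, k3⟩, ⟨_, k1⟩, ⟨_, k2⟩, rfl, rfl, ?_, ?_⟩
  · rw [← hfg, hfg2, mul_assoc (e * e), hpd]
  · rw [← hfg, hfg2', ← mul_assoc (1 - q), hdp, (cde2.mul_left cpe2).eq]
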